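/- For every bimodal formula A: A ∈ S4D if and only if A is valid in every S4D-frame of the form (W, R, ≠), i.e., for every set W and every reflexive transitive relation R on W, the Kripke frame (W, R, ≠) (where the second relation is inequality) validates A. -/

import Mathlib

/-!
Soundness holds on every S4D-frame, and `(W, R, ≠)` is one when `R` is a preorder.

For completeness, the axioms of S4D are canonical, so a non-theorem fails at some point `x` of an
S4D-frame `(W, R, R_D)`. There the reflexive closure of `R_D` is an equivalence relation containing
`R`, so the class of `x` is a generated subframe, in which any two distinct points are
`R_D`-related: `R_D` differs from inequality only in having reflexive points. Adding a second copy
of each `R_D`-reflexive point gives a frame with inequality that projects p-morphically onto that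
subframe, because distinct points over the same point are exactly what `R_D`-reflexivity asks for.
-/

/-- Bimodal formulas: propositional letters, falsum, implication, box, and
the difference modality `[≠]` (called `dbox` here). -/
inductive BForm : Type
  | var : ℕ → BForm
  | bot : BForm
  | imp : BForm → BForm → BForm
  | box : BForm → BForm
  | dbox : BForm → BForm
  deriving DecidableEq

namespace BForm

/-- Classical negation. -/
def neg (A : BForm) : BForm := imp A bot

/-- Classical conjunction. -/
def conj (A B : BForm) : BForm := neg (imp A (neg B))

/-- `◇A = ¬□¬A`. -/
def dia (A : BForm) : BForm := neg (box (neg A))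

/-- `⟨≠⟩A = ¬[≠]¬A`. -/
def ddia (A : BForm) : BForm := neg (dbox (neg A))

end BForm

/-- Truth at a point of a Kripke model over a frame `(W, R, R_D)`. -/
def ksat {W : Type} (R RD : W → W → Prop) (θ : ℕ → Set W) : W → BForm → Prop
  | x, .var n => x ∈ θ n
  | _, .bot => False
  | x, .imp A B => ksat R RD θ x A → ksat R RD θ x B
  | x, .box A => ∀ y, R x y → ksat R RD θ y A
  | x, .dbox A => ∀ y, RD x y → ksat R RD θ y A

/-- Validity in a Kripke frame: truth at every point under every valuation. -/
def kvalid {W : Type} (R RD : W → W → Prop) (A : BForm) : Prop :=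
  ∀ (θ : ℕ → Set W) (x : W), ksat R RD θ x A

/-- Truth at a point of a topological model. -/
def tsat {X : Type} [TopologicalSpace X] (θ : ℕ → Set X) : X → BForm → Prop
  | x, .var n => x ∈ θ n
  | _, .bot => False
  | x, .imp A B => tsat θ x A → tsat θ x B
  | x, .box A => ∃ U : Set X, IsOpen U ∧ x ∈ U ∧ ∀ y ∈ U, tsat θ y A
  | x, .dbox A => ∀ y, y ≠ x → tsat θ y A

/-- Validity in a topological space. -/
def tvalid (X : Type) [TopologicalSpace X] (A : BForm) : Prop :=
  ∀ (θ : ℕ → Set X) (x : X), tsat θ x A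

/-- Uniform substitution of formulas for propositional letters. -/
def substF (σ : ℕ → BForm) : BForm → BForm
  | .var n => σ n
  | .bot => .bot
  | .imp A B => .imp (substF σ A) (substF σ B)
  | .box A => .box (substF σ A)
  | .dbox A => .dbox (substF σ A)

/-- Boolean evaluation of a formula, treating letters and modal formulas as atoms. -/
def beval (v : BForm → Bool) : BForm → Bool
  | .var n => v (.var n)
  | .bot => false
  | .imp A B => !(beval v A) || beval v B
  | .box A => v (.box A)
  | .dbox A => v (.dbox A)

/-- A classical tautology of the bimodal language. -/
def Tautology (A : BForm) : Prop := ∀ v : BForm → Bool, beval v A = true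

/-- The letter `p`. -/
def pLet : BForm := .var 0
/-- The letter `q`. -/
def qLet : BForm := .var 1

/-- The least bimodal logic containing `K₂`, the S4D axioms and the extra axioms `Ax`,
closed under modus ponens, uniform substitution, and both necessitation rules. -/
inductive Logic (Ax : Set BForm) : BForm → Prop
  | taut {A : BForm} : Tautology A → Logic Ax A
  | axKBox : Logic Ax (.imp (.box (.imp pLet qLet)) (.imp (.box pLet) (.box qLet)))
  | axKD : Logic Ax (.imp (.dbox (.imp pLet qLet)) (.imp (.dbox pLet) (.dbox qLet)))
  | axBD : Logic Ax (.imp pLet (.dbox (BForm.ddia pLet)))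
  | ax4mD : Logic Ax (.imp (BForm.conj pLet (.dbox pLet)) (.dbox (.dbox pLet)))
  | axTBox : Logic Ax (.imp (.box pLet) pLet)
  | ax4Box : Logic Ax (.imp (.box pLet) (.box (.box pLet)))
  | axDBox : Logic Ax (.imp (BForm.conj (.dbox pLet) pLet) (.box pLet))
  | extra {A : BForm} : A ∈ Ax → Logic Ax A
  | mp {A B : BForm} : Logic Ax (.imp A B) → Logic Ax A → Logic Ax B
  | subst {A : BForm} (σ : ℕ → BForm) : Logic Ax A → Logic Ax (substF σ A)
  | necBox {A : BForm} : Logic Ax A → Logic Ax (.box A)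
  | necD {A : BForm} : Logic Ax A → Logic Ax (.dbox A)

/-- The axiom (DS): `[≠]p → ◇p`. -/
def dsAx : BForm := .imp (.dbox pLet) (BForm.dia pLet)

/-- The axiom (AT₁): `[≠]p → [≠]□p`. -/
def at1Ax : BForm := .imp (.dbox pLet) (.dbox (.box pLet))

/-- The logic S4D. -/
def S4D : BForm → Prop := Logic ∅

/-- The logic S4DS = S4D + (DS). -/
def S4DS : BForm → Prop := Logic {dsAx}

/-- The logic S4DT1S = S4DS + (AT₁). -/
def S4DT1S : BForm → Prop := Logic {dsAx, at1Ax}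

/-- `(W, R, R_D)` is an S4D-frame: `R` is reflexive and transitive, `R_D` is
symmetric and pseudo-transitive, and `R ⊆ R_D ∪ Id`. -/
structure IsS4DFrame {W : Type} (R RD : W → W → Prop) : Prop where
  refl : ∀ x, R x x
  trans : ∀ ⦃x y z⦄, R x y → R y z → R x z
  symm : ∀ ⦃x y⦄, RD x y → RD y x
  ptrans : ∀ ⦃x y z⦄, RD x y → RD y z → x ≠ z → RD x z
  inc : ∀ ⦃x y⦄, R x y → RD x y ∨ x = y

/-- A T₁-frame: every `R_D`-irreflexive point is `R`-minimal. -/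
def IsT1Frame {W : Type} (R RD : W → W → Prop) : Prop :=
  ∀ x, ¬ RD x x → ∀ y, R y x → y = x

/-- A DS-frame: every `R_D`-irreflexive point has an `R`-successor distinct from itself. -/
def IsDSFrame {W : Type} (R RD : W → W → Prop) : Prop :=
  ∀ x, ¬ RD x x → ∃ y, y ≠ x ∧ R x y

/-- A cd-p-morphism from a topological space `X` onto a Kripke frame `(W, R, R_D)`. -/
structure IsCdPMorphism {X : Type} [TopologicalSpace X] {W : Type}
    (R RD : W → W → Prop) (f : X → W) : Prop where
  surj : Function.Surjective f
  cl : ∀ w : W, closure (f ⁻¹' {w}) = f ⁻¹' {v | R v w}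
  diff : ∀ w : W, {x : X | ∃ y, y ≠ x ∧ f y = w} = f ⁻¹' {v | RD v w}

/-- A p-morphism between Kripke frames. -/
structure IsPMorphism {W W' : Type} (R RD : W → W → Prop) (R' RD' : W' → W' → Prop)
    (f : W → W') : Prop where
  surj : Function.Surjective f
  forth : ∀ ⦃x y⦄, R x y → R' (f x) (f y)
  forthD : ∀ ⦃x y⦄, RD x y → RD' (f x) (f y)
  back : ∀ x z, R' (f x) z → ∃ y, R x y ∧ f y = z
  backD : ∀ x z, RD' (f x) z → ∃ y, RD x y ∧ f y = z

/-- The Alexandrov topology on `W` whose open sets are the `R`-upward-closed sets. -/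
def alexandrov {W : Type} (R : W → W → Prop) : TopologicalSpace W where
  IsOpen U := ∀ ⦃x⦄, x ∈ U → ∀ ⦃y⦄, R x y → y ∈ U
  isOpen_univ := fun _ _ _ _ => trivial
  isOpen_inter := fun _ _ hU hV x hx y hxy => ⟨hU hx.1 hxy, hV hx.2 hxy⟩
  isOpen_sUnion := fun _ hS x hx y hxy => by
    obtain ⟨U, hU, hxU⟩ := hx
    exact ⟨U, hU, hS U hU hxU hxy⟩

open BForm Relation

/-! ### Truth under bounded morphisms -/

section Morphisms

variable {W W' : Type} {R RD : W → W → Prop} {R' RD' : W' → W' → Prop} {A : BForm}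

theorem ksat_preimage_iff {f : W → W'} (hR : ∀ x z, R' (f x) z ↔ ∃ y, R x y ∧ f y = z)
    (hRD : ∀ x z, RD' (f x) z ↔ ∃ y, RD x y ∧ f y = z) (θ : ℕ → Set W') (A : BForm) (x : W) :
    ksat R RD (fun n => f ⁻¹' θ n) x A ↔ ksat R' RD' θ (f x) A := by
  induction A generalizing x with
  | var n => rfl
  | bot => rfl
  | imp A B ihA ihB => exact imp_congr (ihA x) (ihB x)
  | box A ih => simp [ksat, ih, hR]
  | dbox A ih => simp [ksat, ih, hRD]

theorem IsPMorphism.kvalid {f : W → W'} (hf : IsPMorphism R RD R' RD' f) (h : kvalid R RD A) :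
    kvalid R' RD' A := by
  intro θ z
  obtain ⟨x, rfl⟩ := hf.surj z
  refine (ksat_preimage_iff (fun x z => ⟨hf.back x z, ?_⟩) (fun x z => ⟨hf.backD x z, ?_⟩)
    θ A x).1 (h _ x)
  · rintro ⟨y, hxy, rfl⟩
    exact hf.forth hxy
  · rintro ⟨y, hxy, rfl⟩
    exact hf.forthD hxy

theorem ksat_subrel_iff {p : W → Prop} (hR : ∀ ⦃x y⦄, p x → R x y → p y)
    (hRD : ∀ ⦃x y⦄, p x → RD x y → p y) (θ : ℕ → Set W) (A : BForm) (x : Subtype p) :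
    ksat (Subrel R p) (Subrel RD p) (fun n => Subtype.val ⁻¹' θ n) x A ↔ ksat R RD θ x A :=
  ksat_preimage_iff
    (fun x z => ⟨fun h => ⟨⟨z, hR x.2 h⟩, h, rfl⟩, by rintro ⟨y, h, rfl⟩; exact h⟩)
    (fun x z => ⟨fun h => ⟨⟨z, hRD x.2 h⟩, h, rfl⟩, by rintro ⟨y, h, rfl⟩; exact h⟩) θ A x

end Morphisms

/-! ### Soundness -/

section Soundness

variable {W : Type} {R RD : W → W → Prop}

theorem ksat_substF (σ : ℕ → BForm) (θ : ℕ → Set W) (A : BForm) (x : W) :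
    ksat R RD θ x (substF σ A) ↔ ksat R RD (fun n => {y | ksat R RD θ y (σ n)}) x A := by
  induction A generalizing x with
  | var n => rfl
  | bot => rfl
  | imp A B ihA ihB => simp only [substF, ksat, ihA, ihB]
  | box A ih => simp only [substF, ksat, ih]
  | dbox A ih => simp only [substF, ksat, ih]

theorem ksat_conj {θ : ℕ → Set W} {x : W} {A B : BForm} :
    ksat R RD θ x (conj A B) ↔ ksat R RD θ x A ∧ ksat R RD θ x B := by
  simp [conj, neg, ksat]

theorem ksat_ddia {θ : ℕ → Set W} {x : W} {A : BForm} :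
    ksat R RD θ x (ddia A) ↔ ∃ y, RD x y ∧ ksat R RD θ y A := by
  simp [ddia, neg, ksat]

theorem beval_imp_iff {v : BForm → Bool} {A B : BForm} :
    beval v (imp A B) = true ↔ (beval v A = true → beval v B = true) := by
  simp [beval, imp_iff_not_or]

theorem beval_neg_iff {v : BForm → Bool} {A : BForm} :
    beval v (neg A) = true ↔ ¬ beval v A = true := by
  simp [neg, beval]

open Classical in
theorem beval_ksat_iff (θ : ℕ → Set W) (x : W) (A : BForm) :
    beval (fun B => decide (ksat R RD θ x B)) A = true ↔ ksat R RD θ x A := by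
  induction A with
  | imp A B ihA ihB => rw [beval_imp_iff, ihA, ihB, ksat]
  | bot => simp [beval, ksat]
  | _ => exact decide_eq_true_iff

theorem Tautology.kvalid {A : BForm} (hA : Tautology A) : kvalid R RD A :=
  fun θ x => (beval_ksat_iff θ x A).1 (hA _)

theorem Logic.sound {Ax : Set BForm} (hF : IsS4DFrame R RD) (hAx : ∀ B ∈ Ax, kvalid R RD B)
    {A : BForm} (hA : Logic Ax A) : kvalid R RD A := by
  induction hA with
  | taut hA => exact hA.kvalid
  | axKBox => exact fun θ x hpq hp y hxy => hpq y hxy (hp y hxy)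
  | axKD => exact fun θ x hpq hp y hxy => hpq y hxy (hp y hxy)
  | axBD => exact fun θ x hp y hxy => ksat_ddia.2 ⟨x, hF.symm hxy, hp⟩
  | ax4mD =>
    intro θ x hx y hxy z hyz
    obtain ⟨hp, hDp⟩ := ksat_conj.1 hx
    rcases eq_or_ne x z with rfl | hxz
    · exact hp
    · exact hDp z (hF.ptrans hxy hyz hxz)
  | axTBox => exact fun θ x hp => hp x (hF.refl x)
  | ax4Box => exact fun θ x hp y hxy z hyz => hp z (hF.trans hxy hyz)
  | axDBox =>
    intro θ x hx y hxy
    obtain ⟨hDp, hp⟩ := ksat_conj.1 hx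
    rcases hF.inc hxy with h | rfl
    · exact hDp y h
    · exact hp
  | extra hA => exact hAx _ hA
  | mp _ _ ihAB ihA => exact fun θ x => ihAB θ x (ihA θ x)
  | subst σ _ ih => exact fun θ x => (ksat_substF σ θ _ x).2 (ih _ x)
  | necBox _ ih => exact fun θ x y _ => ih θ y
  | necD _ ih => exact fun θ x y _ => ih θ y

theorem isS4DFrame_ne (hrefl : ∀ x, R x x) (htrans : ∀ ⦃x y z⦄, R x y → R y z → R x z) :
    IsS4DFrame R (fun x y => x ≠ y) where
  refl := hrefl
  trans := htrans
  symm _ _ := Ne.symm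
  ptrans _ _ _ _ _ hxz := hxz
  inc x y _ := ne_or_eq x y

end Soundness

/-! ### Theories and Lindenbaum's lemma -/

/-- A theory over `Logic Ax`. Necessitation is not required, so that the formulas true at a point
of a model form a theory. -/
structure IsTheory (Ax T : Set BForm) : Prop where
  logic_mem : ∀ ⦃A⦄, Logic Ax A → A ∈ T
  mp : ∀ ⦃A B⦄, imp A B ∈ T → A ∈ T → B ∈ T

theorem isTheory_logic (Ax : Set BForm) : IsTheory Ax {A | Logic Ax A} where
  logic_mem _ hA := hA
  mp _ _ := .mp

namespace IsTheory

variable {Ax T M : Set BForm} {A B C : BForm}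

theorem mem_of_entails (hT : IsTheory Ax T) (hA : A ∈ T)
    (hAB : ∀ v, beval v A = true → beval v B = true) : B ∈ T :=
  hT.mp (hT.logic_mem (.taut fun v => beval_imp_iff.2 (hAB v))) hA

theorem mem_of_entails₂ (hT : IsTheory Ax T) (hA : A ∈ T) (hB : B ∈ T)
    (hABC : ∀ v, beval v A = true → beval v B = true → beval v C = true) : C ∈ T :=
  hT.mp (hT.mem_of_entails hA fun v hv => beval_imp_iff.2 (hABC v hv)) hB

theorem imp_mem_of_mem (hT : IsTheory Ax T) (hB : B ∈ T) : imp A B ∈ T :=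
  hT.mem_of_entails hB fun _ hv => beval_imp_iff.2 fun _ => hv

/-- By the deduction theorem, `{B | imp A B ∈ T}` is the theory generated by `T` and `A`. -/
theorem adjoin (hT : IsTheory Ax T) (A : BForm) : IsTheory Ax {B | imp A B ∈ T} where
  logic_mem _ hB := hT.imp_mem_of_mem (hT.logic_mem hB)
  mp _ _ hBC hB := hT.mem_of_entails₂ hBC hB fun v => by simp only [beval_imp_iff]; tauto

theorem sUnion {c : Set (Set BForm)} (hc : ∀ T ∈ c, IsTheory Ax T) (hchain : IsChain (· ⊆ ·) c)
    (hne : c.Nonempty) : IsTheory Ax (⋃₀ c) where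
  logic_mem A hA := by
    obtain ⟨T, hT⟩ := hne
    exact ⟨T, hT, (hc T hT).logic_mem hA⟩
  mp A B := by
    rintro ⟨S, hS, hAB⟩ ⟨S', hS', hA⟩
    obtain ⟨T, hT, hST, hS'T⟩ := hchain.directedOn S hS S' hS'
    exact ⟨T, hT, (hc T hT).mp (hST hAB) (hS'T hA)⟩

theorem exists_maximal_notMem (hT : IsTheory Ax T) (hA : A ∉ T) :
    ∃ M, T ⊆ M ∧ Maximal (fun S => IsTheory Ax S ∧ A ∉ S) M := by
  refine zorn_subset_nonempty {S | IsTheory Ax S ∧ A ∉ S} (fun c hc hchain hne => ?_) T ⟨hT, hA⟩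
  refine ⟨⋃₀ c, ⟨sUnion (fun S hS => (hc hS).1) hchain hne, ?_⟩,
    fun S hS => Set.subset_sUnion_of_mem hS⟩
  rintro ⟨S, hS, hAS⟩
  exact (hc hS).2 hAS

theorem imp_mem_of_maximal_notMem (hM : Maximal (fun S => IsTheory Ax S ∧ A ∉ S) M)
    (hB : B ∉ M) : imp B A ∈ M := by
  by_contra hBA
  have hsub : M ⊆ {C | imp B C ∈ M} := fun C hC => hM.prop.1.imp_mem_of_mem hC
  have hBB : imp B B ∈ M := hM.prop.1.logic_mem (.taut fun v => beval_imp_iff.2 id)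
  exact hB (hM.le_of_ge ⟨hM.prop.1.adjoin B, hBA⟩ hsub hBB)

end IsTheory

/-- A maximal consistent theory over `Logic Ax`, maximality being expressed as completeness for
negation. These are the points of the canonical model. -/
structure MaximalTheory (Ax : Set BForm) where
  carrier : Set BForm
  isTheory : IsTheory Ax carrier
  bot_notMem : bot ∉ carrier
  mem_or_neg_mem : ∀ A, A ∈ carrier ∨ neg A ∈ carrier

namespace MaximalTheory

variable {Ax : Set BForm} {A B : BForm}

instance : SetLike (MaximalTheory Ax) BForm where
  coe := carrier
  coe_injective x y h := by cases x; cases y; congr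

theorem mp (x : MaximalTheory Ax) (hAB : Logic Ax (imp A B)) (hA : A ∈ x) : B ∈ x :=
  x.isTheory.mp (x.isTheory.logic_mem hAB) hA

theorem neg_mem_iff {x : MaximalTheory Ax} : neg A ∈ x ↔ A ∉ x :=
  ⟨fun hnA hA => x.bot_notMem (x.isTheory.mp hnA hA), (x.mem_or_neg_mem A).resolve_left⟩

theorem imp_mem_iff {x : MaximalTheory Ax} : imp A B ∈ x ↔ (A ∈ x → B ∈ x) := by
  refine ⟨fun h hA => x.isTheory.mp h hA, fun h => ?_⟩
  by_cases hA : A ∈ x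
  · exact x.isTheory.imp_mem_of_mem (h hA)
  · exact x.isTheory.mem_of_entails (neg_mem_iff.2 hA) fun v => by
      simp only [beval_neg_iff, beval_imp_iff]; tauto

theorem conj_mem_iff {x : MaximalTheory Ax} : conj A B ∈ x ↔ A ∈ x ∧ B ∈ x := by
  simp [conj, neg_mem_iff, imp_mem_iff]

theorem exists_mem_notMem {x y : MaximalTheory Ax} (hxy : x ≠ y) : ∃ A ∈ x, A ∉ y := by
  by_contra! hsub
  refine hxy (SetLike.ext fun A => ⟨hsub A, fun hA => ?_⟩)
  by_contra hAx
  exact neg_mem_iff.1 (hsub _ (neg_mem_iff.2 hAx)) hA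

end MaximalTheory

theorem IsTheory.exists_maximalTheory {Ax T : Set BForm} {A : BForm} (hT : IsTheory Ax T)
    (hA : A ∉ T) : ∃ x : MaximalTheory Ax, T ⊆ x ∧ A ∉ x := by
  obtain ⟨M, hTM, hM⟩ := hT.exists_maximal_notMem hA
  obtain ⟨hMth, hAM⟩ := hM.prop
  refine ⟨⟨M, hMth, fun hbot => hAM ?_, fun B => ?_⟩, hTM, hAM⟩
  · exact hMth.mem_of_entails hbot fun v hv => by simp [beval] at hv
  · by_contra! hB
    refine hAM (hMth.mem_of_entails₂ (imp_mem_of_maximal_notMem hM hB.1)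
      (imp_mem_of_maximal_notMem hM hB.2) fun v => ?_)
    simp only [beval_neg_iff, beval_imp_iff]
    tauto

/-! ### The canonical model -/

/-- A normal modality `m` of `Logic Ax`: a unary operation on formulas satisfying necessitation
and the axiom K. It allows `□` and `[≠]` to be treated alike. -/
structure IsNormal (Ax : Set BForm) (m : BForm → BForm) : Prop where
  nec : ∀ ⦃A⦄, Logic Ax A → Logic Ax (m A)
  axK : ∀ A B, Logic Ax (imp (m (imp A B)) (imp (m A) (m B)))

theorem isNormal_box (Ax : Set BForm) : IsNormal Ax box where
  nec _ := .necBox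
  axK A B := .subst (fun n => if n = 0 then A else B) .axKBox

theorem isNormal_dbox (Ax : Set BForm) : IsNormal Ax dbox where
  nec _ := .necD
  axK A B := .subst (fun n => if n = 0 then A else B) .axKD

theorem IsTheory.preimage {Ax T : Set BForm} {m : BForm → BForm} (hT : IsTheory Ax T)
    (hm : IsNormal Ax m) : IsTheory Ax (m ⁻¹' T) where
  logic_mem _ hA := hT.logic_mem (hm.nec hA)
  mp A B hAB hA := hT.mp (hT.mp (hT.logic_mem (hm.axK A B)) hAB) hA

/-- The accessibility relation of the canonical model for the modality `m`. -/
def canonicalRel {Ax : Set BForm} (m : BForm → BForm) (x y : MaximalTheory Ax) : Prop :=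
  ∀ ⦃A⦄, m A ∈ x → A ∈ y

section Canonical

variable {Ax : Set BForm} {m : BForm → BForm} {A : BForm} {x y z : MaximalTheory Ax}

theorem IsNormal.mem_iff_forall_canonicalRel (hm : IsNormal Ax m) :
    m A ∈ x ↔ ∀ y, canonicalRel m x y → A ∈ y := by
  refine ⟨fun hA y hxy => hxy hA, fun h => ?_⟩
  by_contra hA
  obtain ⟨y, hxy, hAy⟩ := (x.isTheory.preimage hm).exists_maximalTheory hA
  exact hAy (h y fun B hB => hxy hB)

theorem ksat_canonical_iff (A : BForm) (x : MaximalTheory Ax) :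
    ksat (canonicalRel box) (canonicalRel dbox) (fun n => {y | var n ∈ y}) x A ↔ A ∈ x := by
  induction A generalizing x with
  | var n => rfl
  | bot => exact ⟨False.elim, x.bot_notMem⟩
  | imp A B ihA ihB => rw [ksat, ihA, ihB, MaximalTheory.imp_mem_iff]
  | box A ih => simp only [ksat, ih, (isNormal_box Ax).mem_iff_forall_canonicalRel]
  | dbox A ih => simp only [ksat, ih, (isNormal_dbox Ax).mem_iff_forall_canonicalRel]

theorem Logic.of_kvalid_canonical
    (h : kvalid (canonicalRel (Ax := Ax) box) (canonicalRel dbox) A) : Logic Ax A := by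
  by_contra hA
  obtain ⟨x, -, hAx⟩ := (isTheory_logic Ax).exists_maximalTheory hA
  exact hAx ((ksat_canonical_iff A x).1 (h _ x))

theorem canonicalRel_dbox_symm (hxy : canonicalRel dbox x y) : canonicalRel dbox y x := by
  intro A hA
  by_contra hAx
  have hBD : dbox (ddia (neg A)) ∈ x :=
    x.mp (.subst (fun _ => neg A) .axBD) (MaximalTheory.neg_mem_iff.2 hAx)
  have hnn : dbox (neg (neg A)) ∈ y :=
    (y.isTheory.preimage (isNormal_dbox Ax)).mem_of_entails hA fun v => by
      simp only [beval_neg_iff]; tauto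
  exact MaximalTheory.neg_mem_iff.1 (hxy hBD) hnn

/-- The axioms `(4⁻_D)` and `(D_□)` apply to formulas true at `x`, which `A` need not be. Hence they
are applied to the disjunction of `A` with a formula of `x` that fails at `z`. -/
theorem canonicalRel_dbox_of_ne (hxz : x ≠ z)
    (h : ∀ A, A ∈ x → dbox A ∈ x → A ∈ z) : canonicalRel dbox x z := by
  intro A hA
  obtain ⟨C, hCx, hCz⟩ := MaximalTheory.exists_mem_notMem hxz
  have hDor : dbox (imp (neg C) A) ∈ x :=
    (x.isTheory.preimage (isNormal_dbox Ax)).imp_mem_of_mem hA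
  have hor : imp (neg C) A ∈ x :=
    MaximalTheory.imp_mem_iff.2 fun hnC => absurd hCx (MaximalTheory.neg_mem_iff.1 hnC)
  exact MaximalTheory.imp_mem_iff.1 (h _ hor hDor) (MaximalTheory.neg_mem_iff.2 hCz)

theorem isS4DFrame_canonical (Ax : Set BForm) :
    IsS4DFrame (canonicalRel (Ax := Ax) box) (canonicalRel dbox) where
  refl x A := x.mp (.subst (fun _ => A) .axTBox)
  trans x _ _ hxy hyz A hA := hyz (hxy (x.mp (.subst (fun _ => A) .ax4Box) hA))
  symm _ _ := canonicalRel_dbox_symm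
  ptrans x _ _ hxy hyz hxz := canonicalRel_dbox_of_ne hxz fun A hA hDA =>
    hyz (hxy (x.mp (.subst (fun _ => A) .ax4mD) (MaximalTheory.conj_mem_iff.2 ⟨hA, hDA⟩)))
  inc x _ hxy := or_iff_not_imp_right.2 fun hne => canonicalRel_dbox_of_ne hne fun A hA hDA =>
    hxy (x.mp (.subst (fun _ => A) .axDBox) (MaximalTheory.conj_mem_iff.2 ⟨hDA, hA⟩))

end Canonical

/-! ### From S4D-frames to frames with inequality -/

section Doubling

variable {W : Type} {R RD : W → W → Prop}

/-- The points of `W` together with a second copy of each `RD`-reflexive point. -/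
abbrev Doubling (RD : W → W → Prop) : Type := W ⊕ {x // RD x x}

/-- The projection identifying the two copies of each `RD`-reflexive point. -/
def Doubling.proj : Doubling RD → W := Sum.elim id Subtype.val

theorem Doubling.isPMorphism_proj (hRD : ∀ x y, x ≠ y → RD x y) :
    IsPMorphism (InvImage R proj) (fun a b : Doubling RD => a ≠ b) R RD proj where
  surj x := ⟨.inl x, rfl⟩
  forth _ _ hab := hab
  forthD a b hab := by
    by_cases hproj : proj a = proj b
    · rcases a with x | x <;> rcases b with y | y
      · exact absurd (congrArg Sum.inl hproj) hab
      · exact (show x = y.1 from hproj) ▸ y.2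
      · exact (show x.1 = y from hproj) ▸ x.2
      · exact absurd (congrArg Sum.inr (Subtype.ext hproj)) hab
    · exact hRD _ _ hproj
  back _ z hz := ⟨.inl z, hz, rfl⟩
  backD a z haz := by
    rcases a with x | x
    · by_cases hxz : x = z
      · exact ⟨.inr ⟨z, hxz ▸ haz⟩, Sum.inl_ne_inr, rfl⟩
      · exact ⟨.inl z, Sum.inl_injective.ne hxz, rfl⟩
    · exact ⟨.inl z, Sum.inr_ne_inl, rfl⟩

namespace IsS4DFrame

theorem equivalence_reflGen (hF : IsS4DFrame R RD) : Equivalence (ReflGen RD) where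
  refl _ := .refl
  symm := by
    rintro x y (_ | h)
    · exact .refl
    · exact .single (hF.symm h)
  trans := by
    rintro x y z (_ | hxy) (_ | hyz)
    · exact .refl
    · exact .single hyz
    · exact .single hxy
    · rcases eq_or_ne x z with rfl | hxz
      · exact .refl
      · exact .single (hF.ptrans hxy hyz hxz)

theorem reflGen_of_rel (hF : IsS4DFrame R RD) {x y : W} (hxy : R x y) : ReflGen RD x y := by
  rcases hF.inc hxy with h | rfl
  · exact .single h
  · exact .refl

theorem subrel_reflGen_of_ne (hF : IsS4DFrame R RD) {x : W} (y z : Subtype (ReflGen RD x))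
    (hyz : y ≠ z) : Subrel RD (ReflGen RD x) y z := by
  have h : ReflGen RD y.1 z.1 := hF.equivalence_reflGen.trans (hF.equivalence_reflGen.symm y.2) z.2
  exact ((reflGen_iff _ _ _).1 h).resolve_left fun h => hyz (Subtype.ext h.symm)

theorem kvalid_of_forall_kvalid_ne (hF : IsS4DFrame R RD) {A : BForm}
    (h : ∀ (V : Type) (S : V → V → Prop), (∀ x, S x x) → (∀ ⦃x y z⦄, S x y → S y z → S x z) →
      kvalid S (fun x y => x ≠ y) A) : kvalid R RD A := by
  intro θ x
  have hcone : kvalid (Subrel R (ReflGen RD x)) (Subrel RD (ReflGen RD x)) A :=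
    (Doubling.isPMorphism_proj hF.subrel_reflGen_of_ne).kvalid
      (h _ _ (fun _ => hF.refl _) fun _ _ _ hab hbc => hF.trans hab hbc)
  have hR : ∀ ⦃y z⦄, ReflGen RD x y → R y z → ReflGen RD x z := fun _ _ hxy hyz =>
    hF.equivalence_reflGen.trans hxy (hF.reflGen_of_rel hyz)
  have hRD : ∀ ⦃y z⦄, ReflGen RD x y → RD y z → ReflGen RD x z := fun _ _ hxy hyz =>
    hF.equivalence_reflGen.trans hxy (.single hyz)
  exact (ksat_subrel_iff hR hRD θ A ⟨x, .refl⟩).1 (hcone _ _)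

end IsS4DFrame

end Doubling

/-- `A ∈ S4D` iff `A` is valid in every frame `(W, R, ≠)` with `R`
reflexive and transitive. -/
theorem s4d_complete_wrt_inequality_frames (A : BForm) :
    S4D A ↔ ∀ (W : Type) (R : W → W → Prop), Reflexive R → Transitive R →
      kvalid R (fun x y => x ≠ y) A := by
  constructor
  · intro hA W R hrefl htrans
    exact hA.sound (isS4DFrame_ne hrefl htrans) fun _ hB => hB.elim
  · intro h
    exact Logic.of_kvalid_canonical ((isS4DFrame_canonical ∅).kvalid_of_forall_kvalid_ne h)
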